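/- Let ρ₀ satisfy the stated first-order equation with limits a and b at ∓∞. Let v : ℝ → ℝ be twice continuously differentiable with v and v' bounded, let h : ℝ → ℝ be continuous with ∫_ℝ |h(z)ρ₀'(z)| dz < ∞, and suppose −v''(z) + f_A(ρ₀(z))v(z) = h(z) for all z ∈ ℝ. Then ∫_ℝ h(z) ρ₀'(z) dz = 0. -/

import Mathlib

open Filter MeasureTheory

/-- `f_A(ρ) = (ρ² − a²)(ρ² − b²)(2ρ² − a² − b²) + 2((2ρ² − a² − b²)² + 2(ρ² − a²)(ρ² − b²))ρ²`. -/
noncomputable def fA (a b ρ : ℝ) : ℝ :=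
  (ρ ^ 2 - a ^ 2) * (ρ ^ 2 - b ^ 2) * (2 * ρ ^ 2 - a ^ 2 - b ^ 2)
    + 2 * ((2 * ρ ^ 2 - a ^ 2 - b ^ 2) ^ 2
        + 2 * (ρ ^ 2 - a ^ 2) * (ρ ^ 2 - b ^ 2)) * ρ ^ 2

/-!
Differentiating `ρ₀' = G(ρ₀)` twice shows that `ψ = ρ₀'` solves `ψ'' = q ψ` with
`q = G'(ρ₀)² + G(ρ₀) G''(ρ₀) = f_A(ρ₀)`. By Lagrange's identity the Wronskian `v ψ' - v' ψ` is
then a primitive of `h ψ`, so it has limits at `±∞` when `h ψ` is integrable. These limits vanish: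
`ψ` and `ψ'` tend to zero because `ρ₀` tends to zeros of `G`, while `v` is bounded, and the mean
value theorem gives points near `±∞` at which `v'` is bounded as well.
-/

section BoundedFunction

variable {v v' : ℝ → ℝ} {M : ℝ}

lemma exists_abs_deriv_le_of_abs_le (hv : ∀ z, HasDerivAt v (v' z) z) (hM : ∀ z, |v z| ≤ M)
    (x : ℝ) : ∃ ξ ∈ Set.Ioo x (x + 1), |v' ξ| ≤ M + M := by
  obtain ⟨ξ, hξ, hslope⟩ := exists_hasDerivAt_eq_slope v v' (lt_add_one x)
    (fun z _ => (hv z).continuousAt.continuousWithinAt) fun z _ => hv z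
  refine ⟨ξ, hξ, ?_⟩
  calc |v' ξ| = |v (x + 1) - v x| := by rw [hslope, add_sub_cancel_left, div_one]
    _ ≤ |v (x + 1)| + |v x| := abs_sub _ _
    _ ≤ M + M := add_le_add (hM _) (hM _)

lemma frequently_atTop_abs_deriv_le (hv : ∀ z, HasDerivAt v (v' z) z) (hM : ∀ z, |v z| ≤ M) :
    ∃ᶠ z in atTop, |v' z| ≤ M + M :=
  frequently_atTop.2 fun x =>
    let ⟨ξ, hξ, hle⟩ := exists_abs_deriv_le_of_abs_le hv hM x
    ⟨ξ, hξ.1.le, hle⟩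

lemma frequently_atBot_abs_deriv_le (hv : ∀ z, HasDerivAt v (v' z) z) (hM : ∀ z, |v z| ≤ M) :
    ∃ᶠ z in atBot, |v' z| ≤ M + M :=
  frequently_atBot.2 fun x =>
    let ⟨ξ, hξ, hle⟩ := exists_abs_deriv_le_of_abs_le hv hM (x - 1)
    ⟨ξ, (hξ.2.trans_eq (sub_add_cancel x 1)).le, hle⟩

end BoundedFunction

lemma eq_zero_of_tendsto_mul_of_frequently_abs_le {α : Type*} {l : Filter α} {f g : α → ℝ}
    {C L : ℝ} (hf : ∃ᶠ x in l, |f x| ≤ C) (hg : Tendsto g l (nhds 0))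
    (hfg : Tendsto (fun x => f x * g x) l (nhds L)) : L = 0 := by
  have hgap : Tendsto (fun x => C * |g x| - |f x * g x|) l (nhds (-|L|)) := by
    simpa using (hg.abs.const_mul C).sub hfg.abs
  have hgap_nonneg : ∃ᶠ x in l, 0 ≤ C * |g x| - |f x * g x| := hf.mono fun x hx => by
    rw [abs_mul, sub_nonneg]
    gcongr
  have hL : 0 ≤ -|L| := ge_of_tendsto_of_frequently hgap hgap_nonneg
  exact abs_nonpos_iff.1 (neg_nonneg.1 hL)

section Wronskian

variable {v v' v'' ψ ψ' ψ'' q h : ℝ → ℝ}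

lemma hasDerivAt_wronskian {z : ℝ} (hv : HasDerivAt v (v' z) z) (hv' : HasDerivAt v' (v'' z) z)
    (hψ : HasDerivAt ψ (ψ' z) z) (hψ' : HasDerivAt ψ' (ψ'' z) z) :
    HasDerivAt (fun x => v x * ψ' x - v' x * ψ x) (v z * ψ'' z - v'' z * ψ z) z :=
  ((hv.mul hψ').sub (hv'.mul hψ)).congr_deriv (by ring)

lemma wronskian_limit_eq_zero {l : Filter ℝ} {M C L : ℝ} (hv : ∀ z, |v z| ≤ M)
    (hv' : ∃ᶠ z in l, |v' z| ≤ C) (hψ : Tendsto ψ l (nhds 0)) (hψ' : Tendsto ψ' l (nhds 0))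
    (hW : Tendsto (fun z => v z * ψ' z - v' z * ψ z) l (nhds L)) : L = 0 := by
  have hvψ' : Tendsto (fun z => v z * ψ' z) l (nhds 0) :=
    bdd_le_mul_tendsto_zero' M (Eventually.of_forall hv) hψ'
  have hv'ψ : Tendsto (fun z => v' z * ψ z) l (nhds (-L)) := by
    simpa using hvψ'.sub hW
  exact neg_eq_zero.1 (eq_zero_of_tendsto_mul_of_frequently_abs_le hv' hψ hv'ψ)

theorem integral_mul_eq_zero_of_schrodinger {M : ℝ}
    (hv : ∀ z, HasDerivAt v (v' z) z) (hv' : ∀ z, HasDerivAt v' (v'' z) z)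
    (hvM : ∀ z, |v z| ≤ M) (heq : ∀ z, -v'' z + q z * v z = h z)
    (hψ : ∀ z, HasDerivAt ψ (ψ' z) z) (hψ' : ∀ z, HasDerivAt ψ' (q z * ψ z) z)
    (hψ_bot : Tendsto ψ atBot (nhds 0)) (hψ_top : Tendsto ψ atTop (nhds 0))
    (hψ'_bot : Tendsto ψ' atBot (nhds 0)) (hψ'_top : Tendsto ψ' atTop (nhds 0))
    (hint : Integrable fun z => h z * ψ z) :
    ∫ z, h z * ψ z = 0 := by
  have hW : ∀ z, HasDerivAt (fun x => v x * ψ' x - v' x * ψ x) (h z * ψ z) z := fun z =>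
    (hasDerivAt_wronskian (ψ'' := fun z => q z * ψ z)
      (hv z) (hv' z) (hψ z) (hψ' z)).congr_deriv (by rw [← heq z]; ring)
  have hW_bot := tendsto_limUnder_of_hasDerivAt_of_integrableOn_Iic (a := 0)
    (fun z _ => hW z) hint.integrableOn
  have hW_top := tendsto_limUnder_of_hasDerivAt_of_integrableOn_Ioi (a := 0)
    (fun z _ => hW z) hint.integrableOn
  rw [integral_of_hasDerivAt_of_tendsto hW hint hW_bot hW_top,
    wronskian_limit_eq_zero hvM (frequently_atBot_abs_deriv_le hv hvM) hψ_bot hψ'_bot hW_bot,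
    wronskian_limit_eq_zero hvM (frequently_atTop_abs_deriv_le hv hvM) hψ_top hψ'_top hW_top,
    sub_zero]

end Wronskian

section Profile

variable {G G' G'' ρ : ℝ → ℝ}

lemma hasDerivAt_profile_deriv (hG : ∀ r, HasDerivAt G (G' r) r)
    (hρ : ∀ z, HasDerivAt ρ (G (ρ z)) z) (z : ℝ) :
    HasDerivAt (fun x => G (ρ x)) (G' (ρ z) * G (ρ z)) z :=
  (hG (ρ z)).comp z (hρ z)

lemma hasDerivAt_profile_deriv_deriv (hG : ∀ r, HasDerivAt G (G' r) r)
    (hG' : ∀ r, HasDerivAt G' (G'' r) r) (hρ : ∀ z, HasDerivAt ρ (G (ρ z)) z) (z : ℝ) :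
    HasDerivAt (fun x => G' (ρ x) * G (ρ x))
      ((G' (ρ z) ^ 2 + G (ρ z) * G'' (ρ z)) * G (ρ z)) z :=
  (((hG' (ρ z)).comp z (hρ z)).mul (hasDerivAt_profile_deriv hG hρ z)).congr_deriv
    (by simp only [Function.comp_apply]; ring)

theorem integral_mul_profile_deriv_eq_zero {c d M : ℝ} {v v' v'' h : ℝ → ℝ}
    (hG : ∀ r, HasDerivAt G (G' r) r) (hG' : ∀ r, HasDerivAt G' (G'' r) r)
    (hρ : ∀ z, HasDerivAt ρ (G (ρ z)) z) (hGc : G c = 0) (hGd : G d = 0)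
    (hbot : Tendsto ρ atBot (nhds c)) (htop : Tendsto ρ atTop (nhds d))
    (hv : ∀ z, HasDerivAt v (v' z) z) (hv' : ∀ z, HasDerivAt v' (v'' z) z)
    (hvM : ∀ z, |v z| ≤ M) (hint : Integrable fun z => h z * G (ρ z))
    (heq : ∀ z, -v'' z + (G' (ρ z) ^ 2 + G (ρ z) * G'' (ρ z)) * v z = h z) :
    ∫ z, h z * G (ρ z) = 0 := by
  have hψ_zero {l : Filter ℝ} {e : ℝ} (hl : Tendsto ρ l (nhds e)) (he : G e = 0) :
      Tendsto (fun z => G (ρ z)) l (nhds 0) :=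
    he ▸ (hG e).continuousAt.tendsto.comp hl
  have hψ'_zero {l : Filter ℝ} {e : ℝ} (hl : Tendsto ρ l (nhds e)) (he : G e = 0) :
      Tendsto (fun z => G' (ρ z) * G (ρ z)) l (nhds 0) := by
    simpa using ((hG' e).continuousAt.tendsto.comp hl).mul (hψ_zero hl he)
  exact integral_mul_eq_zero_of_schrodinger hv hv' hvM heq
    (hasDerivAt_profile_deriv hG hρ) (hasDerivAt_profile_deriv_deriv hG hG' hρ)
    (hψ_zero hbot hGc) (hψ_zero htop hGd) (hψ'_zero hbot hGc) (hψ'_zero htop hGd) hint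

end Profile

/-- The right-hand side `G` of the profile equation `ρ₀' = G(ρ₀)`. -/
noncomputable def profileSpeed (a b r : ℝ) : ℝ :=
  Real.sqrt 2 / 2 * (r ^ 2 - a ^ 2) * (b ^ 2 - r ^ 2)

section ProfileSpeed

variable (a b r : ℝ)

lemma profileSpeed_left : profileSpeed a b a = 0 := by
  simp [profileSpeed]

lemma profileSpeed_right : profileSpeed a b b = 0 := by
  simp [profileSpeed]

lemma hasDerivAt_profileSpeed :
    HasDerivAt (profileSpeed a b) (Real.sqrt 2 * r * (a ^ 2 + b ^ 2 - 2 * r ^ 2)) r := by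
  have hsq : HasDerivAt (fun r : ℝ => r ^ 2) (2 * r) r := by simpa using hasDerivAt_pow 2 r
  exact (((hsq.sub_const (a ^ 2)).const_mul (Real.sqrt 2 / 2)).mul
    (hsq.const_sub (b ^ 2))).congr_deriv (by ring)

lemma hasDerivAt_profileSpeed_deriv :
    HasDerivAt (fun r => Real.sqrt 2 * r * (a ^ 2 + b ^ 2 - 2 * r ^ 2))
      (Real.sqrt 2 * (a ^ 2 + b ^ 2 - 6 * r ^ 2)) r := by
  have hsq : HasDerivAt (fun r : ℝ => r ^ 2) (2 * r) r := by simpa using hasDerivAt_pow 2 r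
  exact (((hasDerivAt_id r).const_mul (Real.sqrt 2)).mul
    ((hsq.const_mul 2).const_sub (a ^ 2 + b ^ 2))).congr_deriv (by simp only [id]; ring)

lemma fA_eq_sq_deriv_add_mul_deriv_deriv :
    fA a b r = (Real.sqrt 2 * r * (a ^ 2 + b ^ 2 - 2 * r ^ 2)) ^ 2
      + profileSpeed a b r * (Real.sqrt 2 * (a ^ 2 + b ^ 2 - 6 * r ^ 2)) := by
  have hsqrt : Real.sqrt 2 ^ 2 = 2 := Real.sq_sqrt zero_le_two
  unfold fA profileSpeed
  ring_nf
  rw [hsqrt]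
  ring

end ProfileSpeed

theorem statement9_general (a b : ℝ) (ρ₀ : ℝ → ℝ) (hreg : Differentiable ℝ ρ₀)
    (hderiv : ∀ z, deriv ρ₀ z =
      Real.sqrt 2 / 2 * ((ρ₀ z) ^ 2 - a ^ 2) * (b ^ 2 - (ρ₀ z) ^ 2))
    (hbot : Tendsto ρ₀ atBot (nhds a)) (htop : Tendsto ρ₀ atTop (nhds b))
    (v h : ℝ → ℝ) (hv : Differentiable ℝ v) (hv' : Differentiable ℝ (deriv v))
    (hvbd : ∃ M, ∀ z, |v z| ≤ M)
    (hint : Integrable (fun z => h z * deriv ρ₀ z))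
    (heq : ∀ z, -(deriv (deriv v) z) + fA a b (ρ₀ z) * v z = h z) :
    (∫ z : ℝ, h z * deriv ρ₀ z) = 0 := by
  obtain ⟨M, hM⟩ := hvbd
  have hspeed (z : ℝ) : deriv ρ₀ z = profileSpeed a b (ρ₀ z) := hderiv z
  simp only [hspeed] at hint ⊢
  simp only [fA_eq_sq_deriv_add_mul_deriv_deriv] at heq
  exact integral_mul_profile_deriv_eq_zero
    (hasDerivAt_profileSpeed a b) (hasDerivAt_profileSpeed_deriv a b)
    (fun z => hspeed z ▸ (hreg z).hasDerivAt) (profileSpeed_left a b) (profileSpeed_right a b)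
    hbot htop (fun z => (hv z).hasDerivAt) (fun z => (hv' z).hasDerivAt) hM hint heq

/-- (Compatibility condition for the `f_A` operator.) If `v` is `C²` with
`v, v'` bounded, `h` continuous with `h ρ₀'` integrable, and `−v'' + f_A(ρ₀)v = h`, then
`∫_ℝ h ρ₀' = 0`. -/
theorem statement9 (a b : ℝ) (ha : 0 < a) (hab : a < b) (ρ₀ : ℝ → ℝ)
    (hreg : ContDiff ℝ 1 ρ₀)
    (hderiv : ∀ z, deriv ρ₀ z =
      Real.sqrt 2 / 2 * ((ρ₀ z) ^ 2 - a ^ 2) * (b ^ 2 - (ρ₀ z) ^ 2))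
    (hbnd : ∀ z, a < ρ₀ z ∧ ρ₀ z < b)
    (hbot : Tendsto ρ₀ atBot (nhds a))
    (htop : Tendsto ρ₀ atTop (nhds b))
    (v h : ℝ → ℝ) (hv : ContDiff ℝ 2 v)
    (hvbd : ∃ M, ∀ z, |v z| ≤ M)
    (hv'bd : ∃ M, ∀ z, |deriv v z| ≤ M)
    (hh : Continuous h)
    (hint : Integrable (fun z => h z * deriv ρ₀ z))
    (heq : ∀ z, -(deriv (deriv v) z) + fA a b (ρ₀ z) * v z = h z) :
    (∫ z : ℝ, h z * deriv ρ₀ z) = 0 := by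
  exact statement9_general a b ρ₀ (hreg.differentiable one_ne_zero) hderiv hbot htop v h
    (hv.differentiable two_ne_zero) hv.differentiable_deriv_two hvbd hint heq
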